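/- arXiv:2503.08312 — 2 statements merged into one kernel-verified Lean document; each statement's English description precedes it below -/
import Mathlib

section
/- Let A ≤ B be finite-dimensional subspaces of V, decomposed as A = A0 ⊕ A1 and B = Rad(B) ⊕ B1, where A0 ≤ Rad(V), A1 ≤ V1, and B1 is a complement of Rad(B) in B with A1 ≤ B1. Assume that B1 contains a subspace isometric to A1 which does not coincide with A1. Then there exist r ∈ ℕ and a coloring ξ from the set of subspaces of V isometric to A into r colors such that every subspace B' ≤ V isometric to B contains two subspaces, each isometric to A, receiving different ξ-colors; in particular ξ is not monochromatic on any isometric copy of B in V. -/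
open Module Submodule

/-- Two subspaces `X, Y` of `V` are isometric with respect to the bilinear form `β`. -/
def IsIsometric {V : Type*} [AddCommGroup V] [Module (ZMod 2) V]
    (β : V →ₗ[ZMod 2] V →ₗ[ZMod 2] ZMod 2) (X Y : Submodule (ZMod 2) V) : Prop :=
  ∃ f : X ≃ₗ[ZMod 2] Y, ∀ x y : X, β (x : V) (y : V) = β (f x : V) (f y : V)

/-- The radical of a subspace `X` with respect to the bilinear form `β`. -/
def srad {V : Type*} [AddCommGroup V] [Module (ZMod 2) V]
    (β : V →ₗ[ZMod 2] V →ₗ[ZMod 2] ZMod 2) (X : Submodule (ZMod 2) V) :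
    Submodule (ZMod 2) V :=
  X ⊓ (⨅ y ∈ X, LinearMap.ker (β.flip y))

theorem mem_srad {V : Type*} [AddCommGroup V] [Module (ZMod 2) V]
    {β : V →ₗ[ZMod 2] V →ₗ[ZMod 2] ZMod 2} {X : Submodule (ZMod 2) V} {x : V} :
    x ∈ srad β X ↔ x ∈ X ∧ ∀ y ∈ X, β x y = 0 := by
  simp [srad, Submodule.mem_iInf]

theorem IsIsometric.trans {V : Type*} [AddCommGroup V] [Module (ZMod 2) V]
    {β : V →ₗ[ZMod 2] V →ₗ[ZMod 2] ZMod 2} {X Y Z : Submodule (ZMod 2) V}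
    (hXY : IsIsometric β X Y) (hYZ : IsIsometric β Y Z) : IsIsometric β X Z := by
  obtain ⟨f, hf⟩ := hXY
  obtain ⟨g, hg⟩ := hYZ
  exact ⟨f.trans g, fun x y => (hf x y).trans (hg (f x) (f y))⟩

theorem isIsometric_range {V M : Type*} [AddCommGroup V] [Module (ZMod 2) V]
    [AddCommGroup M] [Module (ZMod 2) M] {β : V →ₗ[ZMod 2] V →ₗ[ZMod 2] ZMod 2}
    (p q : M →ₗ[ZMod 2] V) (hp : Function.Injective p) (hq : Function.Injective q)
    (hpq : ∀ x y, β (p x) (p y) = β (q x) (q y)) :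
    IsIsometric β (LinearMap.range p) (LinearMap.range q) := by
  refine ⟨(LinearEquiv.ofInjective p hp).symm.trans (LinearEquiv.ofInjective q hq), ?_⟩
  intro x y
  obtain ⟨x, rfl⟩ := (LinearEquiv.ofInjective p hp).surjective x
  obtain ⟨y, rfl⟩ := (LinearEquiv.ofInjective p hp).surjective y
  simpa using hpq x y

/-- Adjoining a common subspace of the radical of the form preserves isometry. -/
theorem IsIsometric.sup_left {V : Type*} [AddCommGroup V] [Module (ZMod 2) V]
    {β : V →ₗ[ZMod 2] V →ₗ[ZMod 2] ZMod 2} {R X Y : Submodule (ZMod 2) V}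
    (hR : ∀ r ∈ R, ∀ v, β r v = 0 ∧ β v r = 0) (hRX : Disjoint R X) (hRY : Disjoint R Y)
    (hXY : IsIsometric β X Y) : IsIsometric β (R ⊔ X) (R ⊔ Y) := by
  obtain ⟨f, hf⟩ := hXY
  have hrange : LinearMap.range (Y.subtype ∘ₗ f.toLinearMap) = Y := by
    rw [LinearMap.range_comp, LinearEquiv.range, Submodule.map_top, Submodule.range_subtype]
  have key := isIsometric_range (β := β) (R.subtype.coprod X.subtype)
    (R.subtype.coprod (Y.subtype ∘ₗ f.toLinearMap)) ?_ ?_ ?_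
  · rwa [LinearMap.range_coprod, LinearMap.range_coprod, hrange, Submodule.range_subtype,
      Submodule.range_subtype] at key
  · rw [← LinearMap.ker_eq_bot, LinearMap.ker_coprod_of_disjoint_range _ _ (by simpa using hRX)]
    simp
  · rw [← LinearMap.ker_eq_bot, LinearMap.ker_coprod_of_disjoint_range _ _
      (by rw [hrange]; simpa using hRY), LinearMap.ker_eq_bot.2 R.injective_subtype,
      LinearMap.ker_eq_bot.2 (show Function.Injective (Y.subtype ∘ₗ f.toLinearMap) from
        Y.injective_subtype.comp f.injective), Submodule.prod_bot]
  · rintro ⟨r, x⟩ ⟨s, y⟩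
    simp [(hR r r.2 _).1, (hR s s.2 _).2, hf x y]

theorem isIsometric_map_comap_subtype {V : Type*} [AddCommGroup V] [Module (ZMod 2) V]
    {β : V →ₗ[ZMod 2] V →ₗ[ZMod 2] ZMod 2} {B C : Submodule (ZMod 2) V} (hC : C ≤ B)
    (g : B →ₗ[ZMod 2] V) (hg : Function.Injective g)
    (hgβ : ∀ x y : B, β (g x) (g y) = β (x : V) (y : V)) :
    IsIsometric β ((C.comap B.subtype).map g) C := by
  have key := isIsometric_range (β := β) (g ∘ₗ Submodule.inclusion hC) C.subtype
    (hg.comp (Submodule.inclusion_injective hC)) C.injective_subtype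
    (fun x y => hgβ _ _)
  rwa [LinearMap.range_comp, Submodule.range_inclusion, Submodule.range_subtype] at key

/-- `V` is a countably infinite dimensional space over `GF(2)` with an alternating form
`β`, `V = V1 ⊕ Rad(V)` where `V1 = span{e_i, e_i* : i ≤ k}` is an orthogonal sum of `k ≥ 1`
hyperbolic planes and `Rad(V) = ker β` is infinite dimensional.  If `A ≤ B` are finite
dimensional subspaces, `A = A0 ⊕ A1` with `A0 ≤ Rad(V)`, `A1 ≤ V1`,
`B = Rad(B) ⊕ B1`, `A1 ≤ B1`, and `B1` contains an isometric copy of `A1` different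
from `A1`, then some finite coloring of the copies of `A` in `V` is non-monochromatic on
every isometric copy of `B` in `V`. -/
theorem coloring_not_monochromatic_on_copies_of_B
    (k : ℕ) (hk : 1 ≤ k)
    (V : Type*) [AddCommGroup V] [Module (ZMod 2) V]
    (β : V →ₗ[ZMod 2] V →ₗ[ZMod 2] ZMod 2)
    (halt : ∀ v : V, β v v = 0)
    (e estar : Fin k → V)
    (hef : ∀ i j, β (e i) (estar j) = if i = j then 1 else 0)
    (hee : ∀ i j, β (e i) (e j) = 0)
    (hff : ∀ i j, β (estar i) (estar j) = 0)
    (hrank : Module.rank (ZMod 2) V = Cardinal.aleph0)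
    (hcompl : IsCompl (span (ZMod 2) (Set.range e ∪ Set.range estar)) (LinearMap.ker β))
    (hradinf : ¬ FiniteDimensional (ZMod 2) (LinearMap.ker β))
    (A B A0 A1 B1 : Submodule (ZMod 2) V)
    (hAB : A ≤ B)
    (hAfin : FiniteDimensional (ZMod 2) A) (hBfin : FiniteDimensional (ZMod 2) B)
    (hA0rad : A0 ≤ LinearMap.ker β)
    (hA1V1 : A1 ≤ span (ZMod 2) (Set.range e ∪ Set.range estar))
    (hAdec : A = A0 ⊔ A1) (hAdisj : Disjoint A0 A1)
    (hBdec : B = srad β B ⊔ B1) (hBdisj : Disjoint (srad β B) B1)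
    (hA1B1 : A1 ≤ B1)
    (hcopy : ∃ A1' : Submodule (ZMod 2) V, A1' ≤ B1 ∧ IsIsometric β A1' A1 ∧ A1' ≠ A1) :
    ∃ (r : ℕ) (ξ : Submodule (ZMod 2) V → Fin r),
      ∀ B' : Submodule (ZMod 2) V, IsIsometric β B' B →
        ∃ A' A'' : Submodule (ZMod 2) V,
          A' ≤ B' ∧ A'' ≤ B' ∧ IsIsometric β A' A ∧ IsIsometric β A'' A ∧
          ξ A' ≠ ξ A'' := by
  have hsymm : ∀ v w, β v w = 0 → β w v = 0 := fun v w h =>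
    (LinearMap.IsAlt.isRefl halt).eq_zero h
  have hA0 : ∀ r ∈ A0, ∀ v, β r v = 0 ∧ β v r = 0 := fun r hr v => by
    have h : β r v = 0 := by rw [LinearMap.mem_ker.1 (hA0rad hr), LinearMap.zero_apply]
    exact ⟨h, hsymm _ _ h⟩
  have : FiniteDimensional (ZMod 2) (span (ZMod 2) (Set.range e ∪ Set.range estar)) :=
    FiniteDimensional.span_of_finite _ ((Set.finite_range e).union (Set.finite_range estar))
  have : FiniteDimensional (ZMod 2) (V ⧸ LinearMap.ker β) :=
    Module.Finite.equiv (Submodule.quotientEquivOfIsCompl _ _ hcompl.symm).symm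
  have : Finite (V ⧸ LinearMap.ker β) := Module.finite_of_finite (ZMod 2)
  have : Finite (Submodule (ZMod 2) (V ⧸ LinearMap.ker β)) :=
    Finite.of_injective _ SetLike.coe_injective
  obtain ⟨r, ⟨c⟩⟩ := Finite.exists_equiv_fin (Submodule (ZMod 2) (V ⧸ LinearMap.ker β))
  refine ⟨r, fun X => c (X.map (LinearMap.ker β).mkQ), fun B' ⟨f, hf⟩ => ?_⟩
  obtain ⟨A1', hA1'B1, hiso, hne⟩ := hcopy
  have hB1B : B1 ≤ B := hBdec ▸ le_sup_right
  have hA0B : A0 ≤ B := (le_sup_left.trans hAdec.ge).trans hAB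
  have hA0srad : A0 ≤ srad β B := fun x hx => mem_srad.2 ⟨hA0B hx, fun y _ => (hA0 x hx y).1⟩
  have hA'B : A0 ⊔ A1' ≤ B := sup_le hA0B (hA1'B1.trans hB1B)
  let g : B →ₗ[ZMod 2] V := B'.subtype ∘ₗ f.symm.toLinearMap
  have hg : Function.Injective g := B'.injective_subtype.comp f.symm.injective
  have hgB' : ∀ x, g x ∈ B' := fun x => (f.symm x).2
  have hgβ : ∀ x y : B, β (g x) (g y) = β (x : V) (y : V) := fun x y => by
    simpa [g] using hf (f.symm x) (f.symm y)
  refine ⟨((A0 ⊔ A1').comap B.subtype).map g, (A.comap B.subtype).map g,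
    Submodule.map_le_iff_le_comap.2 fun x _ => hgB' x,
    Submodule.map_le_iff_le_comap.2 fun x _ => hgB' x,
    (isIsometric_map_comap_subtype hA'B g hg hgβ).trans ?_,
    isIsometric_map_comap_subtype hAB g hg hgβ, fun hcol => hne ?_⟩
  · rw [hAdec]
    exact hiso.sup_left hA0 (hBdisj.mono hA0srad hA1'B1) hAdisj
  have hle : A1' ≤ A1 := by
    intro x hx
    have hxB : x ∈ B := hB1B (hA1'B1 hx)
    have hmem : (LinearMap.ker β).mkQ (g ⟨x, hxB⟩) ∈
        ((A.comap B.subtype).map g).map (LinearMap.ker β).mkQ := by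
      rw [← c.injective hcol]
      exact Submodule.mem_map_of_mem (Submodule.mem_map_of_mem
        (show x ∈ A0 ⊔ A1' from Submodule.mem_sup_right hx))
    obtain ⟨_, ⟨a, ha, rfl⟩, heq⟩ := hmem
    have hker : g a - g ⟨x, hxB⟩ ∈ LinearMap.ker β := (Submodule.Quotient.eq _).1 heq
    have hrad : (a : V) - x ∈ srad β B := mem_srad.2 ⟨B.sub_mem a.2 hxB, fun y hy => by
      have h := hgβ (a - ⟨x, hxB⟩) ⟨y, hy⟩
      rw [map_sub, LinearMap.mem_ker.1 hker, LinearMap.zero_apply] at h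
      exact h.symm⟩
    have ha' : (a : V) ∈ A0 ⊔ A1 := hAdec ▸ ha
    obtain ⟨a0, ha0, a1, ha1, hsum⟩ := Submodule.mem_sup.1 ha'
    have hdiff : a1 - x ∈ srad β B := by
      have h := (srad β B).sub_mem hrad (hA0srad ha0)
      rwa [← hsum, show a0 + a1 - x - a0 = a1 - x by abel] at h
    have hzero := Submodule.disjoint_def.1 hBdisj _ hdiff
      (B1.sub_mem (hA1B1 ha1) (hA1'B1 hx))
    rwa [← sub_eq_zero.1 hzero]
  have : FiniteDimensional (ZMod 2) A1 :=
    Submodule.finiteDimensional_of_le (le_sup_right.trans hAdec.ge)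
  obtain ⟨φ, -⟩ := hiso
  exact Submodule.eq_of_le_of_finrank_eq hle φ.finrank_eq
end

section
/- Let A be a finite-dimensional subspace of V decomposed as A = A0 ⊕ A1 where A1 ≤ V1 and A0 = Rad(A) = A ∩ Rad(V). Then for every r ∈ ℕ and every finite-dimensional subspace B ≤ V_{A1} with A ≤ B, there exists a finite-dimensional subspace C ≤ V_{A1} such that for every coloring ξ from the set of subspaces of C isometric to A into r colors, there exists a subspace B' with A1 ≤ B' ≤ C and B' isometric to B such that ξ is constant on the set of all subspaces of B' of the form A0' ⊕ A1 with A0' ≤ Rad(V) and A0' ⊕ A1 isometric to A. -/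
open Module Submodule

section Ramsey

variable {K V : Type*} [Field K] [AddCommGroup V] [Module K V]

/-- A subspace of dimension at least that of `M` contains an injective image of `M`. -/
lemma Submodule.exists_injective_range_le {M : Type*} [AddCommGroup M] [Module K M]
    [FiniteDimensional K M] {E : Submodule K V} (h : finrank K M ≤ finrank K E) :
    ∃ f : M →ₗ[K] V, Function.Injective f ∧ LinearMap.range f ≤ E := by
  obtain ⟨b, hb⟩ := exists_linearIndependent_of_le_finrank h
  refine ⟨E.subtype ∘ₗ (finBasis K M).constr K b, ?_, ?_⟩
  · refine E.injective_subtype.comp ?_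
    exact (finBasis K M).injective_constr_of_linearIndependent hb
  · rintro _ ⟨x, rfl⟩
    exact ((finBasis K M).constr K b x).2

/-- Colours of subspaces avoiding a suitable vector `v` can be made to depend only on the
image modulo `v`. -/
lemma exists_color_eq_of_sup_span_eq [Finite K] (κ : Type*) [Finite κ] (u : ℕ) :
    ∃ n : ℕ, ∀ (E : Submodule K V) [FiniteDimensional K E], n ≤ finrank K E →
      ∀ ξ : Submodule K V → κ, ∃ (U : Submodule K V) (v : V),
        U ≤ E ∧ v ∈ E ∧ finrank K U = u ∧ v ∉ U ∧
        ∀ W W' : Submodule K V, W ≤ U ⊔ K ∙ v → W' ≤ U ⊔ K ∙ v → v ∉ W → v ∉ W' →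
          W ⊔ K ∙ v = W' ⊔ K ∙ v → ξ W = ξ W' := by
  have : Finite (Dual K (Fin u → K)) := Module.finite_of_finite K
  obtain ⟨ι, _, hι⟩ := Combinatorics.Line.exists_mono_in_high_dimension
    (Dual K (Fin u → K)) (Submodule K (Fin u → K) → κ)
  refine ⟨u + Fintype.card ι, fun E _ hE ξ ↦ ?_⟩
  obtain ⟨Φ, hΦ, hΦE⟩ := Submodule.exists_injective_range_le
    (M := (Fin u → K) × (ι → K)) (E := E) (by simpa using hE)
  let g (φ : ι → Dual K (Fin u → K)) : (Fin u → K) →ₗ[K] V :=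
    Φ ∘ₗ LinearMap.prod LinearMap.id (LinearMap.pi φ)
  obtain ⟨l, c, hl⟩ := hι fun φ S ↦ ξ (S.map (g φ))
  classical
  let v : V := Φ (0, fun i ↦ if l.idxFun i = none then 1 else 0)
  have hg (φ : Dual K (Fin u → K)) (x : Fin u → K) : g (l φ) x = g (l 0) x + φ x • v := by
    simp only [g, v, LinearMap.comp_apply, ← map_smul, ← map_add]
    congr 1
    refine Prod.ext (by simp) ?_
    funext i
    rcases h : l.idxFun i with _ | ψ <;> simp [Combinatorics.Line.apply_def, h]
  have hginj (x : Fin u → K) (a : K) (h : g (l 0) x = a • v) : x = 0 := by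
    simp only [g, v, LinearMap.comp_apply, ← map_smul] at h
    simpa using congrArg Prod.fst (hΦ h)
  have hv0 : v ≠ 0 := by
    intro h
    obtain ⟨i, hi⟩ := l.proper
    have h2 := hΦ (h.trans (map_zero Φ).symm)
    simpa [hi] using congrFun (congrArg Prod.snd h2) i
  refine ⟨LinearMap.range (g (l 0)), v, ?_, hΦE ⟨_, rfl⟩, ?_, ?_, ?_⟩
  · exact (LinearMap.range_comp_le_range _ _).trans hΦE
  · rw [LinearMap.finrank_range_of_inj]
    · simp
    · rw [← LinearMap.ker_eq_bot, LinearMap.ker_eq_bot']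
      exact fun x hx ↦ hginj x 0 (by simpa using hx)
  · rintro ⟨x, hx⟩
    have h0 := hginj x 1 (by simpa using hx)
    rw [h0, map_zero] at hx
    exact hv0 hx.symm
  · have key (W : Submodule K V) (hW : W ≤ LinearMap.range (g (l 0)) ⊔ K ∙ v) (hvW : v ∉ W) :
        ξ W = c ((W ⊔ K ∙ v).comap (g (l 0))) := by
      obtain ⟨f, hfv, hf⟩ := Submodule.exists_le_ker_of_notMem hvW
      rw [← hl (-((f v)⁻¹ • (f ∘ₗ g (l 0))))]
      congr 1
      ext w
      rw [Submodule.mem_map]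
      simp only [Submodule.mem_comap]
      constructor
      · intro hw
        obtain ⟨_, ⟨x, rfl⟩, _, hz, hxz⟩ := Submodule.mem_sup.1 (hW hw)
        obtain ⟨a, rfl⟩ := Submodule.mem_span_singleton.1 hz
        have hfw : f (g (l 0) x) + a * f v = 0 := by
          have := hf hw
          rw [← hxz] at this
          simpa using this
        refine ⟨x, ?_, (hg _ x).trans ?_⟩
        · rw [eq_sub_of_add_eq hxz]
          exact sub_mem (Submodule.mem_sup_left hw)
            (Submodule.mem_sup_right (Submodule.smul_mem _ _ (Submodule.mem_span_singleton_self v)))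
        · rw [← hxz]
          congr 2
          simp only [LinearMap.neg_apply, LinearMap.smul_apply, LinearMap.comp_apply, smul_eq_mul]
          field_simp
          linear_combination -hfw
      · rintro ⟨x, hx, rfl⟩
        obtain ⟨w, hw, _, hz, hxz⟩ := Submodule.mem_sup.1 hx
        obtain ⟨a, rfl⟩ := Submodule.mem_span_singleton.1 hz
        have hfw : f w = 0 := hf hw
        convert hw using 1
        rw [hg, ← hxz, add_assoc, ← add_smul]
        simp [← hxz, hfw, mul_comm a, inv_mul_cancel_left₀ hfv]
    intro W W' hW hW' hv hv' h
    rw [key W hW hv, key W' hW' hv', h]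

/-- An infinite-dimensional subspace contains finite-dimensional subspaces of arbitrarily large
dimension. -/
lemma exists_le_finrank_of_not_finiteDimensional {R : Submodule K V}
    (hR : ¬ FiniteDimensional K R) (n : ℕ) :
    ∃ E ≤ R, FiniteDimensional K E ∧ n ≤ finrank K E := by
  let b := Basis.ofVectorSpace K R
  have : Infinite (Basis.ofVectorSpaceIndex K R) := by
    by_contra h
    have := not_infinite_iff_finite.1 h
    exact hR (Module.Finite.of_basis b)
  let c : Fin n → V := fun i ↦ b (Infinite.natEmbedding _ i)
  have hc : LinearIndependent K c :=
    (b.linearIndependent.map' R.subtype R.ker_subtype).comp _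
      ((Infinite.natEmbedding _).injective.comp Fin.val_injective)
  refine ⟨span K (Set.range c), span_le.2 ?_, .span_of_finite K (Set.finite_range c), ?_⟩
  · rintro _ ⟨i, rfl⟩
    exact (b _).2
  · rw [finrank_span_eq_card hc, Fintype.card_fin]

lemma finrank_sup_of_disjoint {X Y : Submodule K V} [FiniteDimensional K X]
    [FiniteDimensional K Y] (h : Disjoint X Y) :
    finrank K ↥(X ⊔ Y) = finrank K X + finrank K Y := by
  rw [← Submodule.finrank_sup_add_finrank_inf_eq, h.eq_bot, finrank_bot, add_zero]

lemma finrank_sup_span_singleton {X : Submodule K V} [FiniteDimensional K X] {v : V}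
    (h : v ∉ X) : finrank K ↥(X ⊔ K ∙ v) = finrank K X + 1 := by
  have hv : v ≠ 0 := fun h0 ↦ h (h0 ▸ X.zero_mem)
  rw [finrank_sup_of_disjoint ((Submodule.disjoint_span_singleton' hv).2 h),
    finrank_span_singleton hv]

/-- The off-diagonal Ramsey statement for `t + 1`-dimensional subspaces follows from the
Ramsey statement for `t`-dimensional subspaces. -/
lemma exists_ramsey_succ [Finite K] {κ : Type*} [Fintype κ] (t : ℕ)
    (ih : ∀ m : ℕ, ∃ n : ℕ, ∀ (E : Submodule K V) [FiniteDimensional K E], n ≤ finrank K E →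
      ∀ ξ : Submodule K V → κ, ∃ X ≤ E, finrank K X = m ∧
        ∃ γ, ∀ W ≤ X, finrank K W = t → ξ W = γ) (m : κ → ℕ) :
    ∃ n : ℕ, ∀ (E : Submodule K V) [FiniteDimensional K E], n ≤ finrank K E →
      ∀ ξ : Submodule K V → κ, ∃ γ, ∃ X ≤ E, finrank K X = m γ ∧
        ∀ W ≤ X, finrank K W = t + 1 → ξ W = γ := by
  classical
  induction hs : ∑ c, m c using Nat.strong_induction_on generalizing m with
  | _ s ihs =>
  subst hs
  by_cases h0 : ∃ c, m c = 0
  · obtain ⟨c, hc⟩ := h0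
    refine ⟨0, fun E _ _ ξ ↦ ⟨c, ⊥, bot_le, by simp [hc], fun W hW hWt ↦ ?_⟩⟩
    rw [le_bot_iff.1 hW, finrank_bot] at hWt
    omega
  push Not at h0
  have hstep (γ : κ) := ihs (∑ c, Function.update m γ (m γ - 1) c)
    (Finset.sum_lt_sum (fun c _ ↦ by
      rcases eq_or_ne c γ with rfl | h <;> simp [*]) ⟨γ, Finset.mem_univ _, by
        have := h0 γ; simp; omega⟩) (Function.update m γ (m γ - 1)) rfl
  choose N hN using hstep
  obtain ⟨u, hu⟩ := ih (Finset.univ.sup N)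
  obtain ⟨n, hn⟩ := exists_color_eq_of_sup_span_eq (K := K) (V := V) κ u
  refine ⟨n, fun E _ hE ξ ↦ ?_⟩
  obtain ⟨U, v, hUE, hvE, hUu, hvU, hξ⟩ := hn E hE ξ
  have := Submodule.finiteDimensional_of_le hUE
  obtain ⟨U', hU'U, hU', γ, hγ⟩ := hu U hUu.ge fun X ↦ ξ (X ⊔ K ∙ v)
  have := Submodule.finiteDimensional_of_le hU'U
  obtain ⟨γ', X, hXU', hX, hmono⟩ := hN γ U' (hU' ▸ Finset.le_sup (Finset.mem_univ γ)) ξ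
  have := Submodule.finiteDimensional_of_le hXU'
  have hvX : v ∉ X := fun h ↦ hvU (hU'U (hXU' h))
  rcases eq_or_ne γ' γ with rfl | hne
  · refine ⟨γ', X ⊔ K ∙ v, sup_le (hXU'.trans (hU'U.trans hUE)) (by simpa using hvE), ?_, ?_⟩
    · rw [finrank_sup_span_singleton hvX, hX]
      have := h0 γ'
      simp
      omega
    intro W hW hWt
    have := Submodule.finiteDimensional_of_le hW
    have hmod (Z : Submodule K V) (hvZ : K ∙ v ≤ Z) (hZ : Z ≤ X ⊔ K ∙ v) :
        X ⊓ Z ⊔ K ∙ v = Z := by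
      rw [sup_comm, ← sup_inf_assoc_of_le _ hvZ, sup_comm, inf_eq_right.2 hZ]
    have hvXW : v ∉ X ⊓ W := fun h ↦ hvX h.1
    by_cases hvW : v ∈ W
    · have hWeq := hmod W (by simpa using hvW) hW
      rw [← hWeq]
      refine hγ _ (inf_le_left.trans hXU') ?_
      rw [← hWeq, finrank_sup_span_singleton hvXW] at hWt
      omega
    · have hvY : v ∉ X ⊓ (W ⊔ K ∙ v) := fun h ↦ hvX h.1
      have hYeq := hmod (W ⊔ K ∙ v) le_sup_right (sup_le hW le_sup_right)
      have hXU : X ≤ U ⊔ K ∙ v := (hXU'.trans hU'U).trans le_sup_left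
      rw [hξ W (X ⊓ (W ⊔ K ∙ v)) (hW.trans (sup_le hXU le_sup_right)) (inf_le_left.trans hXU)
        hvW hvY hYeq.symm]
      refine hmono _ inf_le_left ?_
      have h1 := congrArg (fun S : Submodule K V ↦ finrank K S) hYeq
      simp only [finrank_sup_span_singleton hvY, finrank_sup_span_singleton hvW] at h1
      omega
  · exact ⟨γ', X, hXU'.trans (hU'U.trans hUE), by simpa [hne] using hX, hmono⟩

/-- The **Graham–Leeb–Rothschild theorem**: the Ramsey theorem for subspaces of vector spaces
over a finite field. -/
theorem exists_ramsey_subspaces [Finite K] (κ : Type*) [Finite κ] (t m : ℕ) :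
    ∃ n : ℕ, ∀ (E : Submodule K V) [FiniteDimensional K E], n ≤ finrank K E →
      ∀ ξ : Submodule K V → κ, ∃ X ≤ E, finrank K X = m ∧
        ∃ γ, ∀ W ≤ X, finrank K W = t → ξ W = γ := by
  have := Fintype.ofFinite κ
  induction t generalizing m with
  | zero =>
    refine ⟨m, fun E _ hE ξ ↦ ?_⟩
    obtain ⟨f, hf, hfE⟩ := Submodule.exists_injective_range_le
      (M := Fin m → K) (E := E) (by simpa using hE)
    refine ⟨_, hfE, by simp [LinearMap.finrank_range_of_inj hf], ξ ⊥, fun W hW h ↦ ?_⟩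
    have := Submodule.finiteDimensional_of_le hW
    rw [Submodule.finrank_eq_zero.1 h]
  | succ t ih =>
    obtain ⟨n, hn⟩ := exists_ramsey_succ t ih fun _ ↦ m
    refine ⟨n, fun E _ hE ξ ↦ ?_⟩
    obtain ⟨γ, X, hXE, hX, h⟩ := hn E hE ξ
    exact ⟨X, hXE, hX, γ, h⟩

end Ramsey

/-- Sums of a fixed subspace with equidimensional subspaces of the radical are isometric. -/
lemma isIsometric_sup_of_le_ker {V : Type*} [AddCommGroup V] [Module (ZMod 2) V]
    {β : V →ₗ[ZMod 2] V →ₗ[ZMod 2] ZMod 2} (hβ : β.IsAlt) {X Y Z : Submodule (ZMod 2) V}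
    [FiniteDimensional (ZMod 2) X] [FiniteDimensional (ZMod 2) Y]
    (hX : X ≤ LinearMap.ker β) (hY : Y ≤ LinearMap.ker β) (hXZ : Disjoint X Z)
    (hYZ : Disjoint Y Z) (h : finrank (ZMod 2) X = finrank (ZMod 2) Y) :
    IsIsometric β (X ⊔ Z) (Y ⊔ Z) := by
  have inj {X : Submodule (ZMod 2) V} (hXZ : Disjoint X Z) :
      Function.Injective (X.subtype.coprod Z.subtype) := by
    rw [← LinearMap.ker_eq_bot, LinearMap.ker_coprod_of_disjoint_range _ _ (by simpa using hXZ)]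
    simp
  let φ {X : Submodule (ZMod 2) V} (hXZ : Disjoint X Z) : (X × Z) ≃ₗ[ZMod 2] ↥(X ⊔ Z) :=
    LinearEquiv.ofInjective _ (inj hXZ) ≪≫ₗ LinearEquiv.ofEq _ _ (Submodule.sup_eq_range X Z).symm
  have hφ {X : Submodule (ZMod 2) V} (hXZ : Disjoint X Z) (hX : X ≤ LinearMap.ker β)
      (p q : X × Z) : β (φ hXZ p) (φ hXZ q) = β p.2 q.2 := by
    have h1 (x : X) : β x = 0 := hX x.2
    have h2 (x : X) (y : V) : β y x = 0 := by rw [← hβ.neg, h1]; simp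
    simp [φ, h1, h2]
  let g := LinearEquiv.ofFinrankEq X Y h
  refine ⟨(φ hXZ).symm ≪≫ₗ g.prodCongr (LinearEquiv.refl _ Z) ≪≫ₗ φ hYZ, fun x y ↦ ?_⟩
  obtain ⟨p, rfl⟩ := (φ hXZ).surjective x
  obtain ⟨q, rfl⟩ := (φ hXZ).surjective y
  simp [hφ hXZ hX, hφ hYZ hY]

/-- `V` is a countably infinite dimensional space over `GF(2)` with an alternating form
`β`, `V = V1 ⊕ Rad(V)` where `V1` is an orthogonal sum of `k ≥ 1` hyperbolic planes and
`Rad(V) = ker β` is infinite dimensional.  Let `A = A0 ⊕ A1` with `A1 ≤ V1` and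
`A0 = Rad(A) = A ∩ Rad(V)`.  Then for every `r` and every finite dimensional
`B ≤ V_{A1} = Rad(V) ⊔ A1` with `A ≤ B` there is a finite dimensional `C ≤ V_{A1}` such
that every `r`-coloring of copies of `A` in `C` is constant, on the subspaces of the form
`A0' ⊔ A1` (`A0' ≤ Rad(V)`) isometric to `A`, inside some copy `B'` of `B` with
`A1 ≤ B' ≤ C`. -/
theorem ramsey_for_copies_over_A1
    (k : ℕ) (hk : 1 ≤ k)
    (V : Type*) [AddCommGroup V] [Module (ZMod 2) V]
    (β : V →ₗ[ZMod 2] V →ₗ[ZMod 2] ZMod 2)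
    (halt : ∀ v : V, β v v = 0)
    (e estar : Fin k → V)
    (hef : ∀ i j, β (e i) (estar j) = if i = j then 1 else 0)
    (hee : ∀ i j, β (e i) (e j) = 0)
    (hff : ∀ i j, β (estar i) (estar j) = 0)
    (hrank : Module.rank (ZMod 2) V = Cardinal.aleph0)
    (hcompl : IsCompl (span (ZMod 2) (Set.range e ∪ Set.range estar)) (LinearMap.ker β))
    (hradinf : ¬ FiniteDimensional (ZMod 2) (LinearMap.ker β))
    (A A0 A1 : Submodule (ZMod 2) V)
    (hAfin : FiniteDimensional (ZMod 2) A)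
    (hA1V1 : A1 ≤ span (ZMod 2) (Set.range e ∪ Set.range estar))
    (hA0rad : A0 = srad β A)
    (hA0 : A0 = A ⊓ LinearMap.ker β)
    (hAdec : A = A0 ⊔ A1) (hAdisj : Disjoint A0 A1) :
    ∀ (r : ℕ) (B : Submodule (ZMod 2) V),
      FiniteDimensional (ZMod 2) B → B ≤ LinearMap.ker β ⊔ A1 → A ≤ B →
      ∃ C : Submodule (ZMod 2) V,
        FiniteDimensional (ZMod 2) C ∧ C ≤ LinearMap.ker β ⊔ A1 ∧
        ∀ ξ : Submodule (ZMod 2) V → Fin r,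
          ∃ B' : Submodule (ZMod 2) V,
            A1 ≤ B' ∧ B' ≤ C ∧ IsIsometric β B' B ∧
            ∀ A0' A0'' : Submodule (ZMod 2) V,
              A0' ≤ LinearMap.ker β → A0'' ≤ LinearMap.ker β →
              A0' ⊔ A1 ≤ B' → A0'' ⊔ A1 ≤ B' →
              IsIsometric β (A0' ⊔ A1) A → IsIsometric β (A0'' ⊔ A1) A →
              ξ (A0' ⊔ A1) = ξ (A0'' ⊔ A1) := by
  intro r B hBfin hB hAB
  have hd : Disjoint A1 (LinearMap.ker β) := hcompl.disjoint.mono_left hA1V1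
  have hA1A : A1 ≤ A := hAdec ▸ le_sup_right
  have hA0A : A0 ≤ A := hAdec ▸ le_sup_left
  have := Submodule.finiteDimensional_of_le hA1A
  have := Submodule.finiteDimensional_of_le hA0A
  have : FiniteDimensional (ZMod 2) ↥(LinearMap.ker β ⊓ B) :=
    Submodule.finiteDimensional_of_le inf_le_right
  obtain ⟨n, hn⟩ := exists_ramsey_subspaces (K := ZMod 2) (V := V) (Fin r)
    (finrank (ZMod 2) A0) (finrank (ZMod 2) ↥(LinearMap.ker β ⊓ B))
  obtain ⟨E, hEker, hEfin, hEn⟩ : ∃ E ≤ LinearMap.ker β,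
      FiniteDimensional (ZMod 2) E ∧ n ≤ finrank (ZMod 2) E :=
    exists_le_finrank_of_not_finiteDimensional hradinf n
  refine ⟨E ⊔ A1, inferInstance, sup_le_sup_right hEker _, fun ξ ↦ ?_⟩
  obtain ⟨X, hXE, hX, γ, hγ⟩ := hn E hEn fun W ↦ ξ (W ⊔ A1)
  have := Submodule.finiteDimensional_of_le hXE
  have hBeq : (LinearMap.ker β ⊓ B) ⊔ A1 = B := by
    rw [inf_comm, inf_sup_assoc_of_le _ (hA1A.trans hAB), inf_eq_left.2 hB]
  have key (A' : Submodule (ZMod 2) V) (hA' : A' ≤ LinearMap.ker β) (hA'X : A' ⊔ A1 ≤ X ⊔ A1)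
      (hiso : IsIsometric β (A' ⊔ A1) A) : ξ (A' ⊔ A1) = γ := by
    have hle : A' ≤ X := by
      have hXker := hXE.trans hEker
      calc A' ≤ (X ⊔ A1) ⊓ LinearMap.ker β := le_inf (le_sup_left.trans hA'X) hA'
        _ = X := by rw [sup_inf_assoc_of_le _ hXker, hd.eq_bot, sup_bot_eq]
    have := Submodule.finiteDimensional_of_le hle
    refine hγ A' hle ?_
    obtain ⟨f, -⟩ := hiso
    have h1 := f.finrank_eq
    rw [hAdec, finrank_sup_of_disjoint (hd.symm.mono_left hA'),
      finrank_sup_of_disjoint hAdisj] at h1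
    omega
  refine ⟨X ⊔ A1, le_sup_right, sup_le_sup_right hXE _, ?_, fun A' A'' h1 h2 h3 h4 h5 h6 ↦
    (key A' h1 h3 h5).trans (key A'' h2 h4 h6).symm⟩
  have hiso := isIsometric_sup_of_le_ker halt (hXE.trans hEker) inf_le_left
    (hd.symm.mono_left (hXE.trans hEker)) (hd.symm.mono_left inf_le_left) hX
  rwa [hBeq] at hiso
end
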